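/- For every ordinal α < 1^∞, the class {β : α ≤₂ β} has a greatest element, denoted lh₂(α); in particular lh₂(α) = α exactly when α has no <₂-successor. -/

import Mathlib

open FirstOrder

/-- The relation symbols of the language of `ℛ₂`: three binary relations. -/
inductive ordRel : ℕ → Type
  | le : ordRel 2
  | le1 : ordRel 2
  | le2 : ordRel 2

/-- The first-order language with three binary relation symbols `≤`, `≤₁`, `≤₂`. -/
def ordLang : FirstOrder.Language := ⟨fun _ => Empty, ordRel⟩

/-- The `ordLang`-structure on the set of ordinals below `β`, interpreting the three
relation symbols by `≤` and the given relations `le1`, `le2`. -/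
def segStr (le1 le2 : Ordinal → Ordinal → Prop) (β : Ordinal) :
    ordLang.Structure {x : Ordinal // x < β} where
  funMap := fun f => Empty.elim f
  RelMap
    | .le => fun v => (v 0).1 ≤ (v 1).1
    | .le1 => fun v => le1 (v 0).1 (v 1).1
    | .le2 => fun v => le2 (v 0).1 (v 1).1

/-- Σ₁-formulas: a block of existential quantifiers applied to a quantifier-free formula. -/
inductive IsSigma1 {L : FirstOrder.Language} {α : Type} :
    {n : ℕ} → L.BoundedFormula α n → Prop
  | of_isQF {n} {φ : L.BoundedFormula α n} (h : φ.IsQF) : IsSigma1 φ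
  | ex {n} {φ : L.BoundedFormula α (n + 1)} (h : IsSigma1 φ) : IsSigma1 φ.ex

/-- Π₁-formulas: a block of universal quantifiers applied to a quantifier-free formula. -/
inductive IsPi1 {L : FirstOrder.Language} {α : Type} :
    {n : ℕ} → L.BoundedFormula α n → Prop
  | of_isQF {n} {φ : L.BoundedFormula α n} (h : φ.IsQF) : IsPi1 φ
  | all {n} {φ : L.BoundedFormula α (n + 1)} (h : IsPi1 φ) : IsPi1 φ.all

/-- Σ₂-formulas: a block of existential quantifiers applied to a Π₁-formula. -/
inductive IsSigma2 {L : FirstOrder.Language} {α : Type} :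
    {n : ℕ} → L.BoundedFormula α n → Prop
  | of_isPi1 {n} {φ : L.BoundedFormula α n} (h : IsPi1 φ) : IsSigma2 φ
  | ex {n} {φ : L.BoundedFormula α (n + 1)} (h : IsSigma2 φ) : IsSigma2 φ.ex

/-- Realization of a formula with `k` parameters in the segment structure below `β`. -/
def RealizeIn (le1 le2 : Ordinal → Ordinal → Prop) (β : Ordinal) {k : ℕ}
    (φ : ordLang.Formula (Fin k)) (v : Fin k → {x : Ordinal // x < β}) : Prop :=
  letI := segStr le1 le2 β
  φ.Realize v

/-- `a ≤ b` and the segment below `a` is an elementary substructure of the segment below `b`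
with respect to the class `C` of formulas (with parameters from below `a`). -/
def ElemSub (C : ∀ k : ℕ, ordLang.Formula (Fin k) → Prop)
    (le1 le2 : Ordinal → Ordinal → Prop) (a b : Ordinal) : Prop :=
  ∃ hab : a ≤ b,
    ∀ (k : ℕ) (φ : ordLang.Formula (Fin k)), C k φ →
      ∀ v : Fin k → {x : Ordinal // x < a},
        RealizeIn le1 le2 a φ v ↔
          RealizeIn le1 le2 b φ (fun j => ⟨(v j).1, lt_of_lt_of_le (v j).2 hab⟩)

/-- The pair of relations `le1`, `le2` satisfies the simultaneous recursive definition of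
`≤₁` and `≤₂` on the ordinals: `α ≤ᵢ β` iff `α ≤ β` and the segment below `α` is a
Σᵢ-elementary substructure of the segment below `β`. -/
def IsR2Pair (le1 le2 : Ordinal → Ordinal → Prop) : Prop :=
  (∀ a b, le1 a b ↔ ElemSub (fun _ φ => IsSigma1 φ) le1 le2 a b) ∧
  (∀ a b, le2 a b ↔ ElemSub (fun _ φ => IsSigma2 φ) le1 le2 a b)

/-- The strict part of `≤₁`. -/
def Lt1 (le1 : Ordinal → Ordinal → Prop) (a b : Ordinal) : Prop := le1 a b ∧ a ≠ b

/-- The strict part of `≤₂`. -/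
def Lt2 (le2 : Ordinal → Ordinal → Prop) (a b : Ordinal) : Prop := le2 a b ∧ a ≠ b

/-- `1^∞`: the least ordinal `ν` such that below `ν` there are `<₂`-chains of every finite
length. -/
noncomputable def OneInfty (le2 : Ordinal → Ordinal → Prop) : Ordinal :=
  sInf {ν : Ordinal | ∀ n : ℕ, ∃ β : Fin n → Ordinal,
    (∀ i, β i < ν) ∧
    ∀ (i : ℕ) (hi : i + 1 < n), Lt2 le2 (β ⟨i, Nat.lt_of_succ_lt hi⟩) (β ⟨i + 1, hi⟩)}

/-- A respecting forest of order 2: a finite structure with a linear order `≤₀` and partial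
orders `≤₁`, `≤₂` which are forests, with `≤₂ ⊆ ≤₁ ⊆ ≤₀`, and `≤ᵢ₊₁` respecting `≤ᵢ`. -/
structure RForest where
  P : Type
  [fintypeP : Fintype P]
  le0 : P → P → Prop
  le1 : P → P → Prop
  le2 : P → P → Prop
  le0_refl : ∀ p, le0 p p
  le0_trans : ∀ p q r, le0 p q → le0 q r → le0 p r
  le0_antisymm : ∀ p q, le0 p q → le0 q p → p = q
  le0_total : ∀ p q, le0 p q ∨ le0 q p
  le1_refl : ∀ p, le1 p p
  le1_trans : ∀ p q r, le1 p q → le1 q r → le1 p r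
  le1_antisymm : ∀ p q, le1 p q → le1 q p → p = q
  le2_refl : ∀ p, le2 p p
  le2_trans : ∀ p q r, le2 p q → le2 q r → le2 p r
  le2_antisymm : ∀ p q, le2 p q → le2 q p → p = q
  le2_sub_le1 : ∀ p q, le2 p q → le1 p q
  le1_sub_le0 : ∀ p q, le1 p q → le0 p q
  forest1 : ∀ p q r, le1 q p → le1 r p → le1 q r ∨ le1 r q
  forest2 : ∀ p q r, le2 q p → le2 r p → le2 q r ∨ le2 r q
  respects1 : ∀ p q r, le0 p q → le0 q r → le1 p r → le1 p q
  respects2 : ∀ p q r, le1 p q → le1 q r → le2 p r → le2 p q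

attribute [instance] RForest.fintypeP

/-- The finite set `X` of ordinals, with the relations induced from `ℛ₂`, is isomorphic to the
respecting forest `F`. -/
def Realizes (le1 le2 : Ordinal → Ordinal → Prop) (F : RForest) (X : Finset Ordinal) : Prop :=
  ∃ e : F.P ≃ {x // x ∈ X}, ∀ p q : F.P,
    (F.le0 p q ↔ ((e p : Ordinal) ≤ (e q : Ordinal))) ∧
    (F.le1 p q ↔ le1 (e p : Ordinal) (e q : Ordinal)) ∧
    (F.le2 p q ↔ le2 (e p : Ordinal) (e q : Ordinal))

/-- Pointwise comparison of two finite sets of ordinals via their increasing enumerations. -/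
def pwLE (X Y : Finset Ordinal) : Prop :=
  ∃ h : X.card = Y.card, ∀ i : Fin X.card,
    ((X.orderIsoOfFin rfl i : {x // x ∈ X}) : Ordinal) ≤
      ((Y.orderIsoOfFin h.symm i : {x // x ∈ Y}) : Ordinal)

/-- `X` is the isominimal realization of the respecting forest `F` in `ℛ₂`: it is isomorphic
to `F` and pointwise minimal among all finite substructures of `ℛ₂` isomorphic to `F`. -/
def IsIsominimalRealization (le1 le2 : Ordinal → Ordinal → Prop) (F : RForest)
    (X : Finset Ordinal) : Prop :=
  Realizes le1 le2 F X ∧ ∀ Y : Finset Ordinal, Realizes le1 le2 F Y → pwLE X Y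

/-- A covering of the respecting forest `F` into `ℛ₂`. -/
def IsCovering (le1 le2 : Ordinal → Ordinal → Prop) (F : RForest)
    (c : F.P → Ordinal) : Prop :=
  (∀ p q, F.le0 p q ↔ c p ≤ c q) ∧
  (∀ p q, F.le1 p q → le1 (c p) (c q)) ∧
  (∀ p q, F.le2 p q → le2 (c p) (c q))


/-- A covering of the respecting forest `F` into the respecting forest `G`. -/
def ForestCovering (F G : RForest) (f : F.P → G.P) : Prop :=
  (∀ p q, F.le0 p q ↔ G.le0 (f p) (f q)) ∧
  (∀ p q, F.le1 p q → G.le1 (f p) (f q)) ∧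
  (∀ p q, F.le2 p q → G.le2 (f p) (f q))

/-- The segment below `β`, as a type carrying the structure `segStr`. -/
def Seg (_le1 _le2 : Ordinal → Ordinal → Prop) (β : Ordinal) := {x : Ordinal // x < β}

instance segInst (le1 le2 : Ordinal → Ordinal → Prop) (β : Ordinal) :
    ordLang.Structure (Seg le1 le2 β) := segStr le1 le2 β

/-- Inclusion of segments. -/
def segInc (le1 le2 : Ordinal → Ordinal → Prop) {a b : Ordinal} (hab : a ≤ b) :
    Seg le1 le2 a ↪[ordLang] Seg le1 le2 b where
  toFun x := ⟨x.1, lt_of_lt_of_le x.2 hab⟩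
  inj' x y hxy := Subtype.ext (congrArg (fun z : Seg le1 le2 b => z.1) hxy)
  map_fun' f := Empty.elim f
  map_rel' r x := by
    cases r <;> exact Iff.rfl

theorem segInc_comp (le1 le2 : Ordinal → Ordinal → Prop) {a b c : Ordinal} (hab : a ≤ b)
    (hbc : b ≤ c) {ι : Type} (v : ι → Seg le1 le2 a) :
    segInc le1 le2 hbc ∘ (segInc le1 le2 hab ∘ v) = segInc le1 le2 (hab.trans hbc) ∘ v := rfl

theorem segInc_refl (le1 le2 : Ordinal → Ordinal → Prop) {a : Ordinal} (haa : a ≤ a)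
    {ι : Type} (v : ι → Seg le1 le2 a) : segInc le1 le2 haa ∘ v = v := rfl

theorem realizeIn_iff (le1 le2 : Ordinal → Ordinal → Prop) (β : Ordinal) {k : ℕ}
    (φ : ordLang.Formula (Fin k)) (v : Fin k → Seg le1 le2 β) :
    RealizeIn le1 le2 β φ v ↔ φ.Realize v := Iff.rfl

theorem elemSub_iff (le1 le2 : Ordinal → Ordinal → Prop)
    (C : ∀ k : ℕ, ordLang.Formula (Fin k) → Prop) (a b : Ordinal) :
    ElemSub C le1 le2 a b ↔ ∃ hab : a ≤ b, ∀ (k : ℕ) (φ : ordLang.Formula (Fin k)), C k φ →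
      ∀ v : Fin k → Seg le1 le2 a, φ.Realize v ↔ φ.Realize (segInc le1 le2 hab ∘ v) := Iff.rfl

theorem pi1_down {le1 le2 : Ordinal → Ordinal → Prop} {a b : Ordinal} (hab : a ≤ b) {α : Type}
    {n : ℕ} {φ : ordLang.BoundedFormula α n} (hφ : IsPi1 φ) (v : α → Seg le1 le2 a)
    (xs : Fin n → Seg le1 le2 a)
    (H : φ.Realize (segInc le1 le2 hab ∘ v) (segInc le1 le2 hab ∘ xs)) : φ.Realize v xs := by
  induction hφ with
  | of_isQF h => exact (h.realize_embedding (segInc le1 le2 hab)).1 H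
  | all h ih =>
    rw [Language.BoundedFormula.realize_all] at H ⊢
    intro x
    apply ih
    rw [Fin.comp_snoc]
    exact H _

theorem pi1_up {le1 le2 : Ordinal → Ordinal → Prop} {m : Ordinal} {S : Set Ordinal}
    (hS : ∀ β ∈ S, β ≤ m) (hcof : ∀ x < m, ∃ β ∈ S, x < β) {α : Type}
    {n : ℕ} {φ : ordLang.BoundedFormula α n} (hφ : IsPi1 φ) (b : Ordinal) (hb : b ∈ S)
    (v : α → Seg le1 le2 b) (xs : Fin n → Seg le1 le2 b)
    (H : ∀ β ∈ S, ∀ hβ : b ≤ β, φ.Realize (segInc le1 le2 hβ ∘ v) (segInc le1 le2 hβ ∘ xs)) :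
    φ.Realize (segInc le1 le2 (hS b hb) ∘ v) (segInc le1 le2 (hS b hb) ∘ xs) := by
  induction hφ generalizing b with
  | of_isQF h => exact (h.realize_embedding (segInc le1 le2 (hS b hb))).2 (H b hb le_rfl)
  | all h ih =>
    rw [Language.BoundedFormula.realize_all]
    intro x
    obtain ⟨c, hc, hxc⟩ := hcof x.1 x.2
    obtain ⟨d, hd, hbd, hxd⟩ : ∃ d ∈ S, b ≤ d ∧ x.1 < d := by
      rcases le_total b c with h | h
      · exact ⟨c, hc, h, hxc⟩
      · exact ⟨b, hb, le_rfl, hxc.trans_le h⟩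
    obtain ⟨y, rfl⟩ : ∃ y : Seg le1 le2 d, segInc le1 le2 (hS d hd) y = x := ⟨⟨x.1, hxd⟩, rfl⟩
    have := ih d hd (segInc le1 le2 hbd ∘ v) (Fin.snoc (segInc le1 le2 hbd ∘ xs) y) ?_
    · rw [Fin.comp_snoc] at this
      exact this
    · intro β hβ hdβ
      rw [Fin.comp_snoc]
      have := H β hβ (hbd.trans hdβ)
      rw [Language.BoundedFormula.realize_all] at this
      exact this _

theorem sigma2_down {le1 le2 : Ordinal → Ordinal → Prop} {m : Ordinal} {S : Set Ordinal}
    (hS : ∀ β ∈ S, β ≤ m) (hcof : ∀ x < m, ∃ β ∈ S, x < β) {α : Type}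
    {n : ℕ} {φ : ordLang.BoundedFormula α n} (hφ : IsSigma2 φ) (b : Ordinal) (hb : b ∈ S)
    (v : α → Seg le1 le2 b) (xs : Fin n → Seg le1 le2 b)
    (H : φ.Realize (segInc le1 le2 (hS b hb) ∘ v) (segInc le1 le2 (hS b hb) ∘ xs)) :
    ∃ β ∈ S, ∃ hβ : b ≤ β, φ.Realize (segInc le1 le2 hβ ∘ v) (segInc le1 le2 hβ ∘ xs) := by
  induction hφ generalizing b with
  | of_isPi1 h => exact ⟨b, hb, le_rfl, pi1_down (hS b hb) h _ _ H⟩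
  | ex h ih =>
    rw [Language.BoundedFormula.realize_ex] at H
    obtain ⟨x, H⟩ := H
    obtain ⟨c, hc, hxc⟩ := hcof x.1 x.2
    obtain ⟨d, hd, hbd, hxd⟩ : ∃ d ∈ S, b ≤ d ∧ x.1 < d := by
      rcases le_total b c with h | h
      · exact ⟨c, hc, h, hxc⟩
      · exact ⟨b, hb, le_rfl, hxc.trans_le h⟩
    obtain ⟨y, rfl⟩ : ∃ y : Seg le1 le2 d, segInc le1 le2 (hS d hd) y = x := ⟨⟨x.1, hxd⟩, rfl⟩
    obtain ⟨β, hβ, hdβ, h2⟩ :=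
      ih d hd (segInc le1 le2 hbd ∘ v) (Fin.snoc (segInc le1 le2 hbd ∘ xs) y) (by
        rw [Fin.comp_snoc]
        exact H)
    refine ⟨β, hβ, hbd.trans hdβ, ?_⟩
    rw [Language.BoundedFormula.realize_ex]
    rw [Fin.comp_snoc] at h2
    exact ⟨_, h2⟩

theorem pi1_relabel {L : Language} {α β : Type} {m n : ℕ} {φ : L.BoundedFormula α n}
    (hφ : IsPi1 φ) (g : α → β ⊕ Fin m) : IsPi1 (φ.relabel g) := by
  induction hφ with
  | of_isQF h => exact .of_isQF (h.relabel g)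
  | all h ih =>
    rw [Language.BoundedFormula.relabel_all]
    exact .all ih

theorem qf_toFormula {L : Language} {α : Type} {n : ℕ} {φ : L.BoundedFormula α n}
    (hφ : φ.IsQF) : φ.toFormula.IsQF := by
  induction hφ with
  | falsum => exact .falsum
  | of_isAtomic h =>
    cases h with
    | equal t1 t2 => exact .of_isAtomic (.equal _ _)
    | rel R ts => exact .of_isAtomic (.rel _ _)
  | imp _ _ h1 h2 => exact .imp h1 h2

theorem pi1_toFormula {L : Language} {α : Type} {n : ℕ} {φ : L.BoundedFormula α n}
    (hφ : IsPi1 φ) : IsPi1 φ.toFormula := by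
  induction hφ with
  | of_isQF h => exact .of_isQF (qf_toFormula h)
  | all h ih => exact .all (pi1_relabel ih _)

theorem pi1_elem {le1 le2 : Ordinal → Ordinal → Prop} {a b : Ordinal} (hab : a ≤ b)
    (H : ∀ (k : ℕ) (φ : ordLang.Formula (Fin k)), IsSigma2 φ →
      ∀ v : Fin k → Seg le1 le2 a, φ.Realize v ↔ φ.Realize (segInc le1 le2 hab ∘ v))
    {k n : ℕ} {φ : ordLang.BoundedFormula (Fin k) n} (hφ : IsPi1 φ) (v : Fin k → Seg le1 le2 a)
    (xs : Fin n → Seg le1 le2 a) (h : φ.Realize v xs) :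
    φ.Realize (segInc le1 le2 hab ∘ v) (segInc le1 le2 hab ∘ xs) := by
  have h1 := H (k + n) (φ.toFormula.relabel finSumFinEquiv)
    (.of_isPi1 (pi1_relabel (pi1_toFormula hφ) _)) (Sum.elim v xs ∘ finSumFinEquiv.symm)
  rw [Language.Formula.realize_relabel, Language.Formula.realize_relabel,
    Language.BoundedFormula.realize_toFormula, Language.BoundedFormula.realize_toFormula] at h1
  have e1 : ((Sum.elim v xs ∘ finSumFinEquiv.symm) ∘ finSumFinEquiv) = Sum.elim v xs := by
    ext x; simp
  have e2 : ((segInc le1 le2 hab ∘ (Sum.elim v xs ∘ finSumFinEquiv.symm)) ∘ finSumFinEquiv)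
      = segInc le1 le2 hab ∘ Sum.elim v xs := by
    rw [Function.comp_assoc, e1]
  rw [e1, e2] at h1
  exact h1.1 h

theorem sigma2_up {le1 le2 : Ordinal → Ordinal → Prop} {a m : Ordinal} {S : Set Ordinal}
    (hS : ∀ β ∈ S, β ≤ m) (hcof : ∀ x < m, ∃ β ∈ S, x < β) (ha : a ∈ S)
    (hel : ∀ b ∈ S, ∃ hab : a ≤ b, ∀ (k : ℕ) (φ : ordLang.Formula (Fin k)), IsSigma2 φ →
      ∀ v : Fin k → Seg le1 le2 a, φ.Realize v ↔ φ.Realize (segInc le1 le2 hab ∘ v))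
    {k n : ℕ} {φ : ordLang.BoundedFormula (Fin k) n} (hφ : IsSigma2 φ) (v : Fin k → Seg le1 le2 a)
    (xs : Fin n → Seg le1 le2 a) (H : φ.Realize v xs) :
    φ.Realize (segInc le1 le2 (hS a ha) ∘ v) (segInc le1 le2 (hS a ha) ∘ xs) := by
  induction hφ with
  | of_isPi1 h =>
    refine pi1_up hS hcof h a ha v xs fun β hβ hab => ?_
    obtain ⟨_, h2⟩ := hel β hβ
    exact pi1_elem hab h2 h v xs H
  | ex h ih =>
    rw [Language.BoundedFormula.realize_ex] at H ⊢
    obtain ⟨x, H⟩ := H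
    have := ih _ H
    rw [Fin.comp_snoc] at this
    exact ⟨_, this⟩

theorem sigma2_exs {L : Language} {α : Type} {n : ℕ} {φ : L.BoundedFormula α n}
    (hφ : IsSigma2 φ) : IsSigma2 φ.exs := by
  induction n with
  | zero => exact hφ
  | succ n ih => exact ih (.ex hφ)

theorem exists_chain_formula (n j : ℕ) : ∃ φ : ordLang.BoundedFormula (Fin 0) n, φ.IsQF ∧
    ∀ (le1 le2 : Ordinal → Ordinal → Prop) (b : Ordinal) (v : Fin 0 → Seg le1 le2 b)
      (xs : Fin n → Seg le1 le2 b), φ.Realize v xs ↔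
        ∀ (i : ℕ) (hi : i + 1 < n), i < j →
          Lt2 le2 (xs ⟨i, Nat.lt_of_succ_lt hi⟩).1 (xs ⟨i + 1, hi⟩).1 := by
  induction j with
  | zero => exact ⟨⊤, .top, by simp⟩
  | succ j ih =>
    obtain ⟨φ, hφ, hr⟩ := ih
    by_cases hj : j + 1 < n
    · let t1 : ordLang.Term (Fin 0 ⊕ Fin n) := .var (.inr ⟨j, Nat.lt_of_succ_lt hj⟩)
      let t2 : ordLang.Term (Fin 0 ⊕ Fin n) := .var (.inr ⟨j + 1, hj⟩)
      let R : ordLang.Relations 2 := ordRel.le2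
      refine ⟨φ ⊓ (R.boundedFormula₂ t1 t2 ⊓
        (t1.bdEqual t2).not), ?_, ?_⟩
      · exact hφ.inf (.inf (.of_isAtomic (.rel _ _)) (.not (.of_isAtomic (.equal _ _))))
      · intro le1 le2 b v xs
        rw [Language.BoundedFormula.realize_inf, Language.BoundedFormula.realize_inf,
          Language.BoundedFormula.realize_not, Language.BoundedFormula.realize_rel₂,
          Language.BoundedFormula.realize_bdEqual, hr]
        have key : (Language.Structure.RelMap R
            ![t1.realize (Sum.elim v xs), t2.realize (Sum.elim v xs)] ∧
            ¬ t1.realize (Sum.elim v xs) = t2.realize (Sum.elim v xs)) ↔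
            Lt2 le2 (xs ⟨j, Nat.lt_of_succ_lt hj⟩).1 (xs ⟨j + 1, hj⟩).1 := by
          refine and_congr Iff.rfl (not_congr ?_)
          exact Subtype.ext_iff
        rw [key]
        constructor
        · rintro ⟨h1, h2⟩ i hi hij
          rcases Nat.lt_succ_iff_lt_or_eq.1 hij with h | rfl
          · exact h1 i hi h
          · exact h2
        · intro H
          exact ⟨fun i hi hij => H i hi (by omega), H j hj (by omega)⟩
    · refine ⟨φ, hφ, fun le1 le2 b v xs => ?_⟩
      rw [hr]
      exact ⟨fun H i hi hij => H i hi (by omega), fun H i hi hij => H i hi (by omega)⟩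

theorem stmt10 (le1 le2 : Ordinal → Ordinal → Prop) (h : IsR2Pair le1 le2)
    (α : Ordinal) (hα : α < OneInfty le2) :
    ∃ m : Ordinal, (le2 α m ∧ ∀ β, le2 α β → β ≤ m) ∧
      (m = α ↔ ¬ ∃ β, Lt2 le2 α β) := by
  have hle : ∀ a b, le2 a b ↔ ∃ hab : a ≤ b, ∀ (k : ℕ) (φ : ordLang.Formula (Fin k)),
      IsSigma2 φ → ∀ v : Fin k → Seg le1 le2 a,
        φ.Realize v ↔ φ.Realize (segInc le1 le2 hab ∘ v) :=
    fun a b => (h.2 a b).trans (elemSub_iff le1 le2 _ a b)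
  have hrefl : le2 α α := (hle α α).2 ⟨le_rfl, fun k φ _ v => Iff.rfl⟩
  -- boundedness
  obtain ⟨ν, hν⟩ : {ν : Ordinal | ∀ n : ℕ, ∃ β : Fin n → Ordinal,
      (∀ i, β i < ν) ∧
      ∀ (i : ℕ) (hi : i + 1 < n),
        Lt2 le2 (β ⟨i, Nat.lt_of_succ_lt hi⟩) (β ⟨i + 1, hi⟩)}.Nonempty := by
    by_contra hne
    rw [Set.not_nonempty_iff_eq_empty] at hne
    rw [OneInfty, hne, Ordinal.sInf_empty] at hα
    exact absurd hα not_lt_zero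
  have hbd : ∀ β, le2 α β → β ≤ ν := by
    intro β hβ
    by_contra hlt
    rw [not_le] at hlt
    obtain ⟨hab, hel⟩ := (hle α β).1 hβ
    refine absurd hα (not_lt.2 (csInf_le' ?_))
    intro n
    obtain ⟨c, hc1, hc2⟩ := hν n
    obtain ⟨φ, hφ, hr⟩ := exists_chain_formula n n
    have h1 := hel 0 φ.exs (sigma2_exs (.of_isPi1 (.of_isQF hφ))) Fin.elim0
    rw [Language.BoundedFormula.realize_exs, Language.BoundedFormula.realize_exs] at h1
    obtain ⟨xs, hxs⟩ := h1.2 ⟨fun i => ⟨c i, (hc1 i).trans hlt⟩,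
      (hr _ _ _ _ _).2 fun i hi _ => hc2 i hi⟩
    rw [hr] at hxs
    exact ⟨fun i => (xs i).1, fun i => (xs i).2, fun i hi => hxs i hi (by omega)⟩
  let S : Set Ordinal := {β | le2 α β}
  have hSb : BddAbove S := ⟨ν, fun β hβ => hbd β hβ⟩
  have hS : ∀ β ∈ S, β ≤ sSup S := fun β hβ => le_csSup hSb hβ
  have hcof : ∀ x < sSup S, ∃ β ∈ S, x < β := fun x hx => exists_lt_of_lt_csSup ⟨α, hrefl⟩ hx
  have hm : le2 α (sSup S) := by
    refine (hle _ _).2 ⟨hS α hrefl, fun k φ hφ v => ⟨fun H => ?_, fun H => ?_⟩⟩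
    · have := sigma2_up hS hcof hrefl (fun b hb => (hle _ _).1 hb) hφ v _ H
      unfold Language.Formula.Realize
      convert this
    · have H' : Language.BoundedFormula.Realize φ (segInc le1 le2 (hS α hrefl) ∘ v)
          (segInc le1 le2 (hS α hrefl) ∘ (default : Fin 0 → Seg le1 le2 α)) := by
        unfold Language.Formula.Realize at H
        convert H
      obtain ⟨β, hβ, hab, h2⟩ := sigma2_down hS hcof hφ α hrefl v default H'
      obtain ⟨_, hel⟩ := (hle _ _).1 hβ
      refine (hel k φ hφ v).2 ?_
      unfold Language.Formula.Realize
      convert h2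
  refine ⟨sSup S, ⟨hm, hS⟩, ?_⟩
  constructor
  · rintro heq ⟨β, hβ, hne⟩
    exact hne (le_antisymm ((hle _ _).1 hβ).1 (heq ▸ hS β hβ))
  · intro hno
    by_contra hne
    exact hno ⟨_, hm, fun e => hne e.symm⟩
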